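/- The vectors u_α and ᵗu_β obey the linear shift relations ũ_α = −u₀·Ṽ_α + χ_{α,δ}(ξ)·u_α and ᵗu_β = W_β·ᵗũ₀ − χ_{β,−δ}(ξ+δ)·ᵗũ_β, where tilde denotes evaluation at (n+1,m,h); the analogous relations hold with (tilde, δ) replaced by (hat, ε) and by (bar, λ). -/

import Mathlib

open scoped BigOperators

noncomputable section

/-- A period lattice in `ℂ` spanned by two `ℝ`-independent periods. -/
structure EllLattice where
  ω₁ : ℂ
  ω₂ : ℂ
  indep : ∀ a b : ℝ, a • ω₁ + b • ω₂ = 0 → a = 0 ∧ b = 0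

namespace EllLattice

/-- Membership in the lattice `Λ = ℤω₁ + ℤω₂`. -/
def mem (L : EllLattice) (z : ℂ) : Prop := ∃ m n : ℤ, z = m • L.ω₁ + n • L.ω₂

/-- The lattice point with integer coordinates `p = (m, n)`. -/
def per (L : EllLattice) (p : ℤ × ℤ) : ℂ := p.1 • L.ω₁ + p.2 • L.ω₂

/-- The Weierstrass sigma function associated to the lattice, defined by its
Hadamard product over the nonzero lattice points. -/
def sigma (L : EllLattice) (z : ℂ) : ℂ :=
  z * ∏' p : {p : ℤ × ℤ // p ≠ 0},
      ((1 - z / L.per p.1) *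
        Complex.exp (z / L.per p.1 + z ^ 2 / (2 * (L.per p.1) ^ 2)))

/-- The Weierstrass zeta function `ζ = σ′/σ`. -/
def zeta (L : EllLattice) (z : ℂ) : ℂ := deriv L.sigma z / L.sigma z

/-- The Weierstrass `℘`-function `℘ = −ζ′`. -/
def wp (L : EllLattice) (z : ℂ) : ℂ := - deriv L.zeta z

/-- `Φ_ξ(κ) = σ(ξ+κ)/(σ(ξ)σ(κ))`. -/
def Phi (L : EllLattice) (ξ κ : ℂ) : ℂ := L.sigma (ξ + κ) / (L.sigma ξ * L.sigma κ)

/-- The Lamé function `Ψ_ξ(κ) = Φ_ξ(κ)·e^{−ζ(ξ)κ}`. -/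
def Psi (L : EllLattice) (ξ κ : ℂ) : ℂ := L.Phi ξ κ * Complex.exp (-(L.zeta ξ) * κ)

/-- `η_δ(ξ) = ζ(ξ+δ) − ζ(ξ) − ζ(δ)`. -/
def eta (L : EllLattice) (δ ξ : ℂ) : ℂ := L.zeta (ξ + δ) - L.zeta ξ - L.zeta δ

/-- `χ_{α,β}(ξ) = ζ(α) + ζ(β) + ζ(ξ) − ζ(ξ+α+β)`. -/
def chi (L : EllLattice) (α β ξ : ℂ) : ℂ :=
  L.zeta α + L.zeta β + L.zeta ξ - L.zeta (ξ + α + β)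

end EllLattice

open Matrix

/-- All the data entering the elliptic (N,N′)-soliton solutions of the lattice KP system:
a period lattice, lattice parameters `δ, ε, λ`, a base point `ξ₀`, rapidity parameters
`κ_i, κ′_j`, initial plane-wave constants `ρ⁰_i, ν⁰_j` and a constant `N′×N` matrix `C`. -/
structure KPData (N N' : ℕ) where
  L : EllLattice
  del : ℂ
  eps : ℂ
  lam : ℂ
  xi0 : ℂ
  κ : Fin N → ℂ
  κ' : Fin N' → ℂ
  ρ0 : Fin N → ℂ
  ν0 : Fin N' → ℂ
  C : Matrix (Fin N') (Fin N) ℂ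

namespace KPData

variable {N N' : ℕ}

/-- `ξ = ξ₀ + nδ + mε + hλ`. -/
def xi (D : KPData N N') (n m h : ℤ) : ℂ :=
  D.xi0 + n • D.del + m • D.eps + h • D.lam

/-- The plane-wave factor `ρ_i(n,m,h)`. -/
def ρ (D : KPData N N') (i : Fin N) (n m h : ℤ) : ℂ :=
  (Complex.exp (-(D.L.zeta D.del) * D.κ i) * D.L.Psi D.del (-(D.κ i))) ^ n *
  (Complex.exp (-(D.L.zeta D.eps) * D.κ i) * D.L.Psi D.eps (-(D.κ i))) ^ m *
  (Complex.exp (-(D.L.zeta D.lam) * D.κ i) * D.L.Psi D.lam (-(D.κ i))) ^ h *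
  Complex.exp (D.L.zeta (D.xi n m h) * D.κ i) * D.ρ0 i

/-- The plane-wave factor `ν_j(n,m,h)`. -/
def ν (D : KPData N N') (j : Fin N') (n m h : ℤ) : ℂ :=
  (Complex.exp (D.L.zeta D.del * D.κ' j) * D.L.Psi D.del (D.κ' j)) ^ (-n) *
  (Complex.exp (D.L.zeta D.eps * D.κ' j) * D.L.Psi D.eps (D.κ' j)) ^ (-m) *
  (Complex.exp (D.L.zeta D.lam * D.κ' j) * D.L.Psi D.lam (D.κ' j)) ^ (-h) *
  Complex.exp (D.L.zeta (D.xi n m h) * D.κ' j) * D.ν0 j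

/-- The dressed elliptic Cauchy matrix `M_{ij} = ρ_i Ψ_ξ(κ_i + κ′_j) ν_j`. -/
def M (D : KPData N N') (n m h : ℤ) : Matrix (Fin N) (Fin N') ℂ :=
  Matrix.of fun i j => D.ρ i n m h * D.L.Psi (D.xi n m h) (D.κ i + D.κ' j) * D.ν j n m h

/-- The column vector `r = (ρ_i Ψ_ξ(κ_i))_i`. -/
def r (D : KPData N N') (n m h : ℤ) : Fin N → ℂ :=
  fun i => D.ρ i n m h * D.L.Psi (D.xi n m h) (D.κ i)

/-- The column vector `s = (ν_j Ψ_ξ(κ′_j))_j`. -/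
def s (D : KPData N N') (n m h : ℤ) : Fin N' → ℂ :=
  fun j => D.ν j n m h * D.L.Psi (D.xi n m h) (D.κ' j)

/-- The τ-function `τ = det(1 + MC)`. -/
def τ (D : KPData N N') (n m h : ℤ) : ℂ := (1 + D.M n m h * D.C).det

/-- The diagonal matrix `χ_{α,K}(ξ) = diag(χ_{α,κ_i}(ξ))`. -/
def DK (D : KPData N N') (α : ℂ) (n m h : ℤ) : Matrix (Fin N) (Fin N) ℂ :=
  Matrix.diagonal fun i => D.L.chi α (D.κ i) (D.xi n m h)

/-- The diagonal matrix `χ_{β,K′}(ξ) = diag(χ_{β,κ′_j}(ξ))`. -/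
def DK' (D : KPData N N') (β : ℂ) (n m h : ℤ) : Matrix (Fin N') (Fin N') ℂ :=
  Matrix.diagonal fun j => D.L.chi β (D.κ' j) (D.xi n m h)

/-- `W_β = 1 − sᵀ (χ_{β,K′}(ξ))⁻¹ C (1+MC)⁻¹ r`. -/
def W (D : KPData N N') (β : ℂ) (n m h : ℤ) : ℂ :=
  1 - D.s n m h ⬝ᵥ ((D.DK' β n m h)⁻¹ *ᵥ (D.C *ᵥ ((1 + D.M n m h * D.C)⁻¹ *ᵥ D.r n m h)))

/-- `V_α = 1 − sᵀ (1+CM)⁻¹ C (χ_{α,K}(ξ))⁻¹ r`. -/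
def V (D : KPData N N') (α : ℂ) (n m h : ℤ) : ℂ :=
  1 - D.s n m h ⬝ᵥ ((1 + D.C * D.M n m h)⁻¹ *ᵥ (D.C *ᵥ ((D.DK α n m h)⁻¹ *ᵥ D.r n m h)))

/-- `w₀ = sᵀ C (1+MC)⁻¹ r`. -/
def w0 (D : KPData N N') (n m h : ℤ) : ℂ :=
  D.s n m h ⬝ᵥ (D.C *ᵥ ((1 + D.M n m h * D.C)⁻¹ *ᵥ D.r n m h))

/-- `w = ζ(ξ) − w₀ − nζ(δ) − mζ(ε) − hζ(λ)`. -/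
def w (D : KPData N N') (n m h : ℤ) : ℂ :=
  D.L.zeta (D.xi n m h) - D.w0 n m h - n • D.L.zeta D.del - m • D.L.zeta D.eps -
    h • D.L.zeta D.lam

/-- `S_{β,α} = sᵀ (χ_{β,K′}(ξ))⁻¹ C (1+MC)⁻¹ (χ_{α,K}(ξ))⁻¹ r`. -/
def S (D : KPData N N') (β α : ℂ) (n m h : ℤ) : ℂ :=
  D.s n m h ⬝ᵥ ((D.DK' β n m h)⁻¹ *ᵥ
    (D.C *ᵥ ((1 + D.M n m h * D.C)⁻¹ *ᵥ ((D.DK α n m h)⁻¹ *ᵥ D.r n m h))))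

/-- `u_α = (1+MC)⁻¹ (χ_{α,K}(ξ))⁻¹ r`. -/
def u (D : KPData N N') (α : ℂ) (n m h : ℤ) : Fin N → ℂ :=
  (1 + D.M n m h * D.C)⁻¹ *ᵥ ((D.DK α n m h)⁻¹ *ᵥ D.r n m h)

/-- `u₀ = (1+MC)⁻¹ r`. -/
def u0 (D : KPData N N') (n m h : ℤ) : Fin N → ℂ :=
  (1 + D.M n m h * D.C)⁻¹ *ᵥ D.r n m h

/-- the adjoint (row) vector `ᵗu_β = sᵀ (χ_{β,K′}(ξ))⁻¹ (1+CM)⁻¹`. -/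
def tu (D : KPData N N') (β : ℂ) (n m h : ℤ) : Fin N' → ℂ :=
  (D.s n m h ᵥ* (D.DK' β n m h)⁻¹) ᵥ* (1 + D.C * D.M n m h)⁻¹

/-- the adjoint (row) vector `ᵗu₀ = sᵀ (1+CM)⁻¹`. -/
def tu0 (D : KPData N N') (n m h : ℤ) : Fin N' → ℂ :=
  D.s n m h ᵥ* (1 + D.C * D.M n m h)⁻¹

/-- The gauge variable `𝒱_α = Φ_ξ(α)·V_α`. -/
def calV (D : KPData N N') (α : ℂ) (n m h : ℤ) : ℂ :=
  D.L.Phi (D.xi n m h) α * D.V α n m h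

/-- The gauge variable `𝒲_β = Φ_ξ(β)·W_β`. -/
def calW (D : KPData N N') (β : ℂ) (n m h : ℤ) : ℂ :=
  D.L.Phi (D.xi n m h) β * D.W β n m h

/-- The Schwarzian variable `Z_{β,α} = Φ_ξ(α+β)·(1 − χ_{α,β}(ξ)·S_{β,α})`. -/
def Z (D : KPData N N') (β α : ℂ) (n m h : ℤ) : ℂ :=
  D.L.Phi (D.xi n m h) (α + β) * (1 - D.L.chi α β (D.xi n m h) * D.S β α n m h)

/-- Genericity of the parameters (together with finitely many auxiliary points `extra`):
no nontrivial integer combination of `ξ₀, δ, ε, λ`, the rapidity parameters and the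
auxiliary points lies on the lattice.  In particular all arguments of `σ` occurring in
the soliton solutions and their shifts lie outside `Λ`. -/
def Generic {P : ℕ} (D : KPData N N') (extra : Fin P → ℂ) : Prop :=
  ∀ (c0 cn cm ch : ℤ) (a : Fin N → ℤ) (b : Fin N' → ℤ) (e : Fin P → ℤ),
    ¬ (c0 = 0 ∧ cn = 0 ∧ cm = 0 ∧ ch = 0 ∧ a = 0 ∧ b = 0 ∧ e = 0) →
    ¬ D.L.mem (c0 • D.xi0 + cn • D.del + cm • D.eps + ch • D.lam +
      (∑ i, a i • D.κ i) + (∑ j, b j • D.κ' j) + ∑ t, e t • extra t)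

end KPData

/-!
In `M`, `r` and `s` the exponential factors of the plane waves cancel those of `Ψ`, so only `Φ`
enters. Fay's identity for `Φ`, which is the three-term identity of `σ` and comes from Liouville's
theorem, then says that one lattice step changes `M` by a matrix of rank one: `M = M̃ + r s̃ᵀ`. The
confluent form of the three-term identity factors `χ` into values of `σ`, so the same identity gives
`χ̃_α⁻¹ r̃ = -r + χ_{α,δ}(ξ) χ_α⁻¹ r` and, on reading it with `ξ + δ` and `-δ` in place of `ξ` and
`δ`, `sᵀ χ_β⁻¹ = s̃ᵀ - χ_{β,-δ}(ξ + δ) s̃ᵀ χ̃_β⁻¹`. Multiplying by the resolvents `(1 + MC)⁻¹` and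
`(1 + CM)⁻¹`, which change by a rank-one term as well, gives the relations for `u_α` and `ᵗu_β`.
-/

open Filter Topology

section CanonicalProduct

lemma hasSum_deriv_logDeriv_of_hasProdLocallyUniformly {ι : Type*} {f : ι → ℂ → ℂ} {g : ℂ → ℂ}
    (hfg : HasProdLocallyUniformly f g) (hf : ∀ i, Differentiable ℂ (f i)) {z : ℂ}
    (hz : g z ≠ 0) :
    HasSum (fun i => deriv (logDeriv (f i)) z) (deriv (logDeriv g) z) := by
  let F : Finset ι → ℂ → ℂ := fun t x => ∏ i ∈ t, f i x
  have hF : ∀ t, Differentiable ℂ (F t) := fun t => by fun_prop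
  have hFg : TendstoLocallyUniformlyOn F g atTop Set.univ :=
    tendstoLocallyUniformlyOn_univ.mpr hfg
  have hg : Differentiable ℂ g := differentiableOn_univ.mp <|
    hFg.differentiableOn (.of_forall fun t => (hF t).differentiableOn) isOpen_univ
  have hU : IsOpen {x | g x ≠ 0} := isOpen_ne_fun hg.continuous continuous_const
  have hne : ∀ x ∈ {x | g x ≠ 0}, ∀ i, f i x ≠ 0 := fun x hx i hi =>
    hx ((hfg.hasProd).unique (hasProd_zero_of_exists_eq_zero ⟨i, hi⟩))
  have hlog : TendstoLocallyUniformlyOn (fun t => logDeriv (F t)) (logDeriv g) atTop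
      {x | g x ≠ 0} :=
    ((hFg.deriv (.of_forall fun t => (hF t).differentiableOn) isOpen_univ).mono
      (Set.subset_univ _)).div₀ (hFg.mono (Set.subset_univ _))
      hg.deriv.continuous.continuousOn hg.continuous.continuousOn fun x hx => hx
  have hlogdiff : ∀ i, DifferentiableOn ℂ (logDeriv (f i)) {x | g x ≠ 0} := fun i =>
    (hf i).deriv.differentiableOn.div (hf i).differentiableOn fun x hx => hne x hx i
  have hsum : ∀ t : Finset ι, Set.EqOn (logDeriv (F t)) (fun x => ∑ i ∈ t, logDeriv (f i) x)
      {x | g x ≠ 0} := fun t x hx =>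
    logDeriv_prod (fun i _ => hne x hx i) fun i _ => hf i x
  have hsumdiff : ∀ t, DifferentiableOn ℂ (logDeriv (F t)) {x | g x ≠ 0} := fun t =>
    (DifferentiableOn.fun_sum fun i _ => hlogdiff i).congr (hsum t)
  refine ((hlog.deriv (.of_forall hsumdiff) hU).tendsto_at hz).congr fun t => ?_
  have hmem : {x | g x ≠ 0} ∈ 𝓝 z := hU.mem_nhds hz
  rw [Function.comp_apply, ((hsum t).eventuallyEq_of_mem hmem).deriv_eq]
  exact deriv_fun_sum fun i _ => (hlogdiff i).differentiableAt hmem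

/-- The Weierstrass elementary factor `E₂(w) = (1 - w) exp (w + w²/2)`. -/
def elementaryFactor (w : ℂ) : ℂ := (1 - w) * Complex.exp (w + w ^ 2 / 2)

lemma hasDerivAt_elementaryFactor (w : ℂ) :
    HasDerivAt elementaryFactor (-w ^ 2 * Complex.exp (w + w ^ 2 / 2)) w := by
  have hexponent : HasDerivAt (fun w : ℂ => w + w ^ 2 / 2) (1 + w) w :=
    ((hasDerivAt_id' w).fun_add ((hasDerivAt_pow 2 w).div_const 2)).congr_deriv (by simp)
  exact (((hasDerivAt_id' w).const_sub 1).fun_mul hexponent.cexp).congr_deriv (by ring)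

lemma differentiable_elementaryFactor : Differentiable ℂ elementaryFactor := fun w =>
  (hasDerivAt_elementaryFactor w).differentiableAt

lemma differentiable_elementaryFactor_div (c : ℂ) :
    Differentiable ℂ fun z => elementaryFactor (z / c) :=
  differentiable_elementaryFactor.comp (differentiable_id.div_const c)

lemma elementaryFactor_ne_zero {w : ℂ} (hw : w ≠ 1) : elementaryFactor w ≠ 0 :=
  mul_ne_zero (sub_ne_zero.mpr hw.symm) (Complex.exp_ne_zero _)

lemma elementaryFactor_zero : elementaryFactor 0 = 1 := by
  simp [elementaryFactor]

lemma norm_deriv_elementaryFactor_le {w : ℂ} (hw : ‖w‖ ≤ 1) :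
    ‖deriv elementaryFactor w‖ ≤ Real.exp 2 * ‖w‖ ^ 2 := by
  have hexponent : ‖w + w ^ 2 / 2‖ ≤ 2 := calc
    ‖w + w ^ 2 / 2‖ ≤ ‖w‖ + ‖w‖ ^ 2 / 2 :=
        (norm_add_le _ _).trans_eq (by simp)
    _ ≤ 2 := by nlinarith [norm_nonneg w]
  calc ‖deriv elementaryFactor w‖ = ‖Complex.exp (w + w ^ 2 / 2)‖ * ‖w‖ ^ 2 := by
        rw [(hasDerivAt_elementaryFactor w).deriv, norm_mul, norm_neg, norm_pow, mul_comm]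
    _ ≤ Real.exp 2 * ‖w‖ ^ 2 := by
        gcongr
        exact (Complex.norm_exp_le_exp_norm _).trans (Real.exp_le_exp.mpr hexponent)

lemma norm_elementaryFactor_sub_one_le {w : ℂ} (hw : ‖w‖ ≤ 1) :
    ‖elementaryFactor w - 1‖ ≤ Real.exp 2 * ‖w‖ ^ 3 := by
  have hderiv : ∀ x ∈ Metric.closedBall (0 : ℂ) ‖w‖,
      ‖deriv elementaryFactor x‖ ≤ Real.exp 2 * ‖w‖ ^ 2 := fun x hx => by
    have hx' : ‖x‖ ≤ ‖w‖ := by simpa using hx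
    exact (norm_deriv_elementaryFactor_le (hx'.trans hw)).trans (by gcongr)
  have hmvt := (convex_closedBall (0 : ℂ) ‖w‖).norm_image_sub_le_of_norm_deriv_le
    (fun x _ => differentiable_elementaryFactor x) hderiv (x := 0) (y := w) (by simp) (by simp)
  rw [elementaryFactor_zero, sub_zero] at hmvt
  exact hmvt.trans_eq (by ring)

lemma logDeriv_elementaryFactor_div {a z : ℂ} (ha : a ≠ 0) (hz : z ≠ a) :
    logDeriv (fun x => elementaryFactor (x / a)) z = (z - a)⁻¹ + a⁻¹ + z / a ^ 2 := by
  have hza : z - a ≠ 0 := sub_ne_zero.mpr hz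
  have hfactor : elementaryFactor (z / a) = (1 - z / a) * Complex.exp (z / a + (z / a) ^ 2 / 2) :=
    rfl
  have haz : 1 - z / a ≠ 0 := by
    rw [one_sub_div ha]; exact div_ne_zero (sub_ne_zero.mpr hz.symm) ha
  have hcomp := (hasDerivAt_elementaryFactor (z / a)).comp z ((hasDerivAt_id' z).div_const a)
  have hderiv : deriv (fun x => elementaryFactor (x / a)) z =
      -(z / a) ^ 2 * Complex.exp (z / a + (z / a) ^ 2 / 2) * (1 / a) := hcomp.deriv
  rw [logDeriv_apply, hderiv, hfactor, div_eq_iff (mul_ne_zero haz (Complex.exp_ne_zero _))]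
  field_simp
  ring

lemma deriv_logDeriv_elementaryFactor_div {a z : ℂ} (ha : a ≠ 0) (hz : z ≠ a) :
    deriv (logDeriv fun x => elementaryFactor (x / a)) z = -(1 / (z - a) ^ 2 - 1 / a ^ 2) := by
  have heq : (logDeriv fun x => elementaryFactor (x / a)) =ᶠ[𝓝 z]
      fun x => (x - a)⁻¹ + a⁻¹ + x / a ^ 2 := by
    filter_upwards [isOpen_ne.mem_nhds hz] with x hx using logDeriv_elementaryFactor_div ha hx
  have hderiv := ((((hasDerivAt_id' z).sub_const a).fun_inv (sub_ne_zero.mpr hz)).add_const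
    a⁻¹).fun_add ((hasDerivAt_id' z).div_const (a ^ 2))
  rw [heq.deriv_eq, hderiv.deriv]
  ring

variable {ι : Type*} {a : ι → ℂ}

/-- The canonical product of genus two with zeros `a i`. -/
def canonicalProduct (a : ι → ℂ) (z : ℂ) : ℂ := ∏' i, elementaryFactor (z / a i)

lemma eventually_norm_elementaryFactor_div_sub_one_le (ha : Summable fun i => ‖a i‖⁻¹ ^ 3)
    (R : ℝ) : ∀ᶠ i in cofinite, ∀ z ∈ Metric.closedBall (0 : ℂ) R,
      ‖elementaryFactor (z / a i) - 1‖ ≤ Real.exp 2 * R ^ 3 * ‖a i‖⁻¹ ^ 3 := by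
  have hlim : Tendsto (fun i => (R * ‖a i‖⁻¹) ^ 3) cofinite (𝓝 0) := by
    simpa [mul_pow] using ha.tendsto_cofinite_zero.const_mul (R ^ 3)
  filter_upwards [hlim.eventually_le_const one_pos] with i hi z hz
  have hzR : ‖z / a i‖ ≤ R * ‖a i‖⁻¹ := by
    rw [norm_div, div_eq_mul_inv]
    gcongr
    simpa using hz
  have hz1 : ‖z / a i‖ ≤ 1 :=
    hzR.trans ((pow_le_one_iff_of_nonneg ((norm_nonneg _).trans hzR) three_ne_zero).mp hi)
  calc ‖elementaryFactor (z / a i) - 1‖ ≤ Real.exp 2 * ‖z / a i‖ ^ 3 :=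
        norm_elementaryFactor_sub_one_le hz1
    _ ≤ Real.exp 2 * (R * ‖a i‖⁻¹) ^ 3 := by gcongr
    _ = Real.exp 2 * R ^ 3 * ‖a i‖⁻¹ ^ 3 := by ring

lemma hasProdLocallyUniformly_canonicalProduct (ha : Summable fun i => ‖a i‖⁻¹ ^ 3) :
    HasProdLocallyUniformly (fun i z => elementaryFactor (z / a i)) (canonicalProduct a) := by
  refine hasProdLocallyUniformly_of_forall_compact fun K hK => ?_
  obtain ⟨R, hR⟩ := hK.isBounded.subset_closedBall 0
  have hcont : ∀ i, Continuous fun z => elementaryFactor (z / a i) - 1 := fun i =>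
    (differentiable_elementaryFactor_div (a i)).continuous.sub continuous_const
  have hprod := Summable.hasProdUniformlyOn_one_add hK (ha.mul_left (Real.exp 2 * R ^ 3))
    ((eventually_norm_elementaryFactor_div_sub_one_le ha R).mono fun i hi z hz => hi z (hR hz))
    fun i => (hcont i).continuousOn
  simp only [add_sub_cancel] at hprod
  exact hprod

lemma differentiable_canonicalProduct (ha : Summable fun i => ‖a i‖⁻¹ ^ 3) :
    Differentiable ℂ (canonicalProduct a) :=
  differentiableOn_univ.mp <|
    (tendstoLocallyUniformlyOn_univ.mpr
      (hasProdLocallyUniformly_canonicalProduct ha)).differentiableOn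
      (.of_forall fun _ => DifferentiableOn.fun_finsetProd fun i _ =>
        (differentiable_elementaryFactor_div (a i)).differentiableOn) isOpen_univ

lemma canonicalProduct_zero : canonicalProduct a 0 = 1 := by
  simp [canonicalProduct, elementaryFactor_zero]

lemma canonicalProduct_ne_zero (ha : Summable fun i => ‖a i‖⁻¹ ^ 3) {z : ℂ}
    (hz : ∀ i, z ≠ a i) : canonicalProduct a z ≠ 0 := by
  have hfactor : ∀ i, 1 + (elementaryFactor (z / a i) - 1) ≠ 0 := fun i => by
    rw [add_sub_cancel]
    exact elementaryFactor_ne_zero fun h => hz i (eq_of_div_eq_one h)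
  have hsummable : Summable fun i => ‖elementaryFactor (z / a i) - 1‖ :=
    (ha.mul_left (Real.exp 2 * ‖z‖ ^ 3)).of_norm_bounded_eventually <|
      (eventually_norm_elementaryFactor_div_sub_one_le ha ‖z‖).mono fun i hi => by
        simpa using hi z (by simp)
  simpa [canonicalProduct] using tprod_one_add_ne_zero_of_summable hfactor hsummable

lemma canonicalProduct_neg_of_equiv (e : ι ≃ ι) (he : ∀ i, a (e i) = -a i) (z : ℂ) :
    canonicalProduct a (-z) = canonicalProduct a z := by
  rw [canonicalProduct, ← e.tprod_eq]
  simp [he, canonicalProduct]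

lemma hasSum_deriv_logDeriv_canonicalProduct (ha : Summable fun i => ‖a i‖⁻¹ ^ 3)
    (ha0 : ∀ i, a i ≠ 0) {z : ℂ} (hz : ∀ i, z ≠ a i) :
    HasSum (fun i => -(1 / (z - a i) ^ 2 - 1 / a i ^ 2))
      (deriv (logDeriv (canonicalProduct a)) z) := by
  simpa only [fun i => deriv_logDeriv_elementaryFactor_div (ha0 i) (hz i)] using
    hasSum_deriv_logDeriv_of_hasProdLocallyUniformly (hasProdLocallyUniformly_canonicalProduct ha)
      (fun i => differentiable_elementaryFactor_div (a i)) (canonicalProduct_ne_zero ha hz)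

end CanonicalProduct

namespace EllLattice

variable (L : EllLattice)

/-- The same lattice in the form used by Mathlib's theory of the Weierstrass `℘`-function. -/
def toPeriodPair : PeriodPair where
  ω₁ := L.ω₁
  ω₂ := L.ω₂
  indep := LinearIndependent.pair_iff.mpr L.indep

lemma mem_iff_mem_lattice (z : ℂ) : L.mem z ↔ z ∈ L.toPeriodPair.lattice := by
  simp [PeriodPair.mem_lattice, mem, toPeriodPair, eq_comm]

lemma per_eq_latticeEquivProd_symm (p : ℤ × ℤ) :
    L.per p = L.toPeriodPair.latticeEquivProd.symm p := by
  rw [PeriodPair.latticeEquiv_symm_apply]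
  simp [per, toPeriodPair]

lemma per_mem_lattice (p : ℤ × ℤ) : L.per p ∈ L.toPeriodPair.lattice := by
  rw [per_eq_latticeEquivProd_symm]
  exact Subtype.property _

lemma per_ne_zero {p : ℤ × ℤ} (hp : p ≠ 0) : L.per p ≠ 0 := by
  simpa [per_eq_latticeEquivProd_symm] using hp

lemma per_neg (p : ℤ × ℤ) : L.per (-p) = -L.per p := by
  simp [per_eq_latticeEquivProd_symm]

/-- The nonzero lattice points, as a family indexed like the product defining `σ`. -/
def nonzeroPer (p : {p : ℤ × ℤ // p ≠ 0}) : ℂ := L.per p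

lemma nonzeroPer_ne_zero (p : {p : ℤ × ℤ // p ≠ 0}) : L.nonzeroPer p ≠ 0 :=
  L.per_ne_zero p.2

lemma ne_nonzeroPer {z : ℂ} (hz : z ∉ L.toPeriodPair.lattice) (p : {p : ℤ × ℤ // p ≠ 0}) :
    z ≠ L.nonzeroPer p :=
  ne_of_mem_of_not_mem (L.per_mem_lattice p) hz |>.symm

lemma summable_nonzeroPer : Summable fun p => ‖L.nonzeroPer p‖⁻¹ ^ 3 := by
  have hlattice := ZLattice.summable_norm_pow_inv L.toPeriodPair.lattice 3 (by simp)
  refine (hlattice.comp_injective (L.toPeriodPair.latticeEquivProd.symm.injective.comp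
    Subtype.val_injective)).congr fun p => ?_
  simp [nonzeroPer, per_eq_latticeEquivProd_symm]

lemma sigma_eq_mul_canonicalProduct (z : ℂ) :
    L.sigma z = z * canonicalProduct L.nonzeroPer z := by
  refine congrArg (z * ·) (tprod_congr fun p => ?_)
  rw [elementaryFactor, nonzeroPer, div_pow, div_div, mul_comm _ (2 : ℂ)]

lemma differentiable_sigma : Differentiable ℂ L.sigma := by
  rw [funext L.sigma_eq_mul_canonicalProduct]
  exact differentiable_id.mul (differentiable_canonicalProduct L.summable_nonzeroPer)

lemma sigma_zero : L.sigma 0 = 0 := by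
  simp [sigma]

lemma deriv_sigma_zero : deriv L.sigma 0 = 1 := by
  have hprod := differentiable_canonicalProduct L.summable_nonzeroPer 0
  rw [funext L.sigma_eq_mul_canonicalProduct, deriv_fun_mul differentiableAt_fun_id hprod]
  simp [canonicalProduct_zero]

lemma sigma_neg (z : ℂ) : L.sigma (-z) = -L.sigma z := by
  let e : {p : ℤ × ℤ // p ≠ 0} ≃ {p : ℤ × ℤ // p ≠ 0} :=
    (Equiv.neg (ℤ × ℤ)).subtypeEquiv (by simp)
  have he : ∀ p, L.nonzeroPer (e p) = -L.nonzeroPer p := fun p => L.per_neg p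
  rw [sigma_eq_mul_canonicalProduct, canonicalProduct_neg_of_equiv e he,
    sigma_eq_mul_canonicalProduct, neg_mul]

lemma sigma_ne_zero_of_notMem_lattice {z : ℂ} (hz : z ∉ L.toPeriodPair.lattice) :
    L.sigma z ≠ 0 := by
  rw [sigma_eq_mul_canonicalProduct]
  exact mul_ne_zero (ne_of_mem_of_not_mem (zero_mem _) hz).symm
    (canonicalProduct_ne_zero L.summable_nonzeroPer (L.ne_nonzeroPer hz))

lemma isOpen_compl_lattice : IsOpen (L.toPeriodPair.lattice : Set ℂ)ᶜ :=
  L.toPeriodPair.isClosed_lattice.isOpen_compl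

lemma countable_lattice : (L.toPeriodPair.lattice : Set ℂ).Countable :=
  L.toPeriodPair.latticeEquivProd.toEquiv.countable_iff.mpr inferInstance

lemma isPreconnected_compl_lattice : IsPreconnected (L.toPeriodPair.lattice : Set ℂ)ᶜ :=
  (L.countable_lattice.isConnected_compl_of_one_lt_rank
    (by simp [Complex.rank_real_complex])).isPreconnected

lemma dense_compl_lattice : Dense (L.toPeriodPair.lattice : Set ℂ)ᶜ :=
  L.countable_lattice.dense_compl ℝ

lemma add_notMem_lattice {ω z : ℂ} (hω : ω ∈ L.toPeriodPair.lattice)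
    (hz : z ∉ L.toPeriodPair.lattice) : z + ω ∉ L.toPeriodPair.lattice := fun h =>
  hz ((Submodule.add_mem_iff_left _ hω).mp h)

lemma differentiableAt_zeta {z : ℂ} (hz : z ∉ L.toPeriodPair.lattice) :
    DifferentiableAt ℂ L.zeta z :=
  (L.differentiable_sigma.deriv z).div (L.differentiable_sigma z)
    (L.sigma_ne_zero_of_notMem_lattice hz)

lemma hasSum_weierstrassPExcept_zero (z : ℂ) :
    HasSum (fun p => 1 / (z - L.nonzeroPer p) ^ 2 - 1 / L.nonzeroPer p ^ 2)
      (L.toPeriodPair.weierstrassPExcept 0 z) := by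
  have hlattice := (L.toPeriodPair.latticeEquivProd.symm.toEquiv.hasSum_iff).mpr
    (L.toPeriodPair.hasSum_weierstrassPExcept 0 z)
  rw [← hasSum_subtype_iff_of_support_subset (s := {p | p ≠ 0})] at hlattice
  · refine hlattice.congr_fun fun p => ?_
    rw [nonzeroPer, per_eq_latticeEquivProd_symm]
    exact (if_neg fun h => p.2 (by simpa using h)).symm
  · rintro p hp rfl
    simp at hp

lemma deriv_zeta {z : ℂ} (hz : z ∉ L.toPeriodPair.lattice) :
    deriv L.zeta z = -L.toPeriodPair.weierstrassP z := by
  have hne0 : ∀ x ∉ L.toPeriodPair.lattice, x ≠ 0 := fun x hx =>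
    (ne_of_mem_of_not_mem (zero_mem _) hx).symm
  have hprod0 : ∀ x ∉ L.toPeriodPair.lattice, canonicalProduct L.nonzeroPer x ≠ 0 := fun x hx =>
    canonicalProduct_ne_zero L.summable_nonzeroPer (L.ne_nonzeroPer hx)
  have hprod := differentiable_canonicalProduct L.summable_nonzeroPer
  have hzeta : L.zeta =ᶠ[𝓝 z] fun x => x⁻¹ + logDeriv (canonicalProduct L.nonzeroPer) x := by
    filter_upwards [L.isOpen_compl_lattice.mem_nhds hz] with x hx
    change logDeriv L.sigma x = _
    rw [funext L.sigma_eq_mul_canonicalProduct, logDeriv_mul x (hne0 x hx) (hprod0 x hx)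
      differentiableAt_fun_id (hprod x), logDeriv_id', one_div]
  have hlog : DifferentiableAt ℂ (logDeriv (canonicalProduct L.nonzeroPer)) z :=
    (hprod.deriv z).div (hprod z) (hprod0 z hz)
  have hsum := (hasSum_deriv_logDeriv_canonicalProduct L.summable_nonzeroPer
    L.nonzeroPer_ne_zero (L.ne_nonzeroPer hz)).unique (L.hasSum_weierstrassPExcept_zero z).neg
  have hP := L.toPeriodPair.weierstrassPExcept_add 0 z
  simp only [ZeroMemClass.coe_zero, sub_zero] at hP
  rw [hzeta.deriv_eq, deriv_fun_add (differentiableAt_inv (hne0 z hz)) hlog, deriv_inv, hsum, ← hP]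
  simp

lemma exists_zeta_add_eq {ω : ℂ} (hω : ω ∈ L.toPeriodPair.lattice) :
    ∃ η : ℂ, ∀ z ∉ L.toPeriodPair.lattice, L.zeta (z + ω) = L.zeta z + η :=
  L.isOpen_compl_lattice.exists_eq_add_of_deriv_eq L.isPreconnected_compl_lattice
    (fun z hz => ((L.differentiableAt_zeta (L.add_notMem_lattice hω hz)).comp z
      (differentiableAt_id.add_const ω)).differentiableWithinAt)
    (fun _ hz => (L.differentiableAt_zeta hz).differentiableWithinAt)
    fun z hz => by
      rw [deriv_comp_add_const, L.deriv_zeta (L.add_notMem_lattice hω hz), L.deriv_zeta hz]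
      exact congrArg Neg.neg (L.toPeriodPair.weierstrassP_add_coe z ⟨ω, hω⟩)

lemma exists_sigma_add_eq {ω : ℂ} (hω : ω ∈ L.toPeriodPair.lattice) :
    ∃ A η : ℂ, A ≠ 0 ∧ ∀ z, L.sigma (z + ω) = A * Complex.exp (η * z) * L.sigma z := by
  obtain ⟨η, hη⟩ := L.exists_zeta_add_eq hω
  have hσ := L.differentiable_sigma
  have hshift : Differentiable ℂ fun z => L.sigma (z + ω) := by fun_prop
  have hexp : Differentiable ℂ fun z => Complex.exp (η * z) := by fun_prop
  have hlogDeriv : Set.EqOn (logDeriv fun z => L.sigma (z + ω))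
      (logDeriv fun z => Complex.exp (η * z) * L.sigma z) (L.toPeriodPair.lattice : Set ℂ)ᶜ := by
    intro z hz
    have hz' := hη z hz
    simp only [zeta] at hz'
    rw [logDeriv_mul (f := fun z => Complex.exp (η * z)) z (Complex.exp_ne_zero _)
      (L.sigma_ne_zero_of_notMem_lattice hz) (hexp z) (hσ z), logDeriv_apply,
      deriv_comp_add_const, hz', logDeriv_apply, logDeriv_apply, deriv_cexp (by fun_prop)]
    simp [mul_comm, add_comm]
  obtain ⟨A, hA, hEq⟩ := (logDeriv_eqOn_iff hshift.differentiableOn (hexp.mul hσ).differentiableOn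
    L.isOpen_compl_lattice L.isPreconnected_compl_lattice
    (fun z hz => mul_ne_zero (Complex.exp_ne_zero _) (L.sigma_ne_zero_of_notMem_lattice hz))
    fun z hz => L.sigma_ne_zero_of_notMem_lattice (L.add_notMem_lattice hω hz)).mp hlogDeriv
  have hfun := hshift.continuous.ext_on L.dense_compl_lattice
    (continuous_const.smul (hexp.mul hσ).continuous) hEq
  exact ⟨A, η, hA, fun z => (congrFun hfun z).trans (mul_assoc _ _ _).symm⟩

lemma sigma_eq_zero_iff (z : ℂ) : L.sigma z = 0 ↔ z ∈ L.toPeriodPair.lattice := by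
  refine ⟨fun h => by_contra fun hz => L.sigma_ne_zero_of_notMem_lattice hz h, fun hz => ?_⟩
  obtain ⟨A, η, -, hσ⟩ := L.exists_sigma_add_eq hz
  simpa [sigma_zero] using hσ 0

lemma deriv_sigma_ne_zero {ω : ℂ} (hω : ω ∈ L.toPeriodPair.lattice) : deriv L.sigma ω ≠ 0 := by
  obtain ⟨A, η, hA, hσ⟩ := L.exists_sigma_add_eq hω
  have hderiv : deriv (fun z => L.sigma (z + ω)) 0 = A := by
    rw [funext hσ, deriv_fun_mul (by fun_prop) (L.differentiable_sigma 0)]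
    simp [sigma_zero, deriv_sigma_zero]
  rw [deriv_comp_add_const, zero_add] at hderiv
  rwa [hderiv]

end EllLattice

section Liouville

open Classical in
/-- The quotient `H / K`, continued by the quotient of the derivatives across the zeros of `K`;
it is entire when these zeros are simple and `H` vanishes there. -/
def entireQuotient (H K : ℂ → ℂ) (z : ℂ) : ℂ :=
  if K z = 0 then deriv H z / deriv K z else H z / K z

variable {H K : ℂ → ℂ}

lemma entireQuotient_mul_cancel (hzero : ∀ z, K z = 0 → H z = 0) (z : ℂ) :
    entireQuotient H K z * K z = H z := by
  by_cases hz : K z = 0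
  · rw [hz, hzero z hz, mul_zero]
  · rw [entireQuotient, if_neg hz, div_mul_cancel₀ _ hz]

lemma differentiable_dslope (hH : Differentiable ℂ H) (z : ℂ) : Differentiable ℂ (dslope H z) :=
  differentiableOn_univ.mp <|
    (Complex.differentiableOn_dslope univ_mem).mpr hH.differentiableOn

lemma entireQuotient_eventuallyEq_dslope (hK : Differentiable ℂ K) {z : ℂ} (hHz : H z = 0)
    (hKz : K z = 0) (hKz' : deriv K z ≠ 0) :
    entireQuotient H K =ᶠ[𝓝 z] fun x => dslope H z x / dslope K z x := by
  have hne : dslope K z z ≠ 0 := by rwa [dslope_same]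
  filter_upwards [(differentiable_dslope hK z).continuous.continuousAt.eventually_ne hne]
    with x hx
  obtain rfl | hxz := eq_or_ne x z
  · rw [entireQuotient, if_pos hKz, dslope_same, dslope_same]
  · have hsub : x - z ≠ 0 := sub_ne_zero.mpr hxz
    have hHx : H x = (x - z) * dslope H z x := (sub_smul_dslope_of_zero hHz x).symm
    have hKx : K x = (x - z) * dslope K z x := (sub_smul_dslope_of_zero hKz x).symm
    rw [entireQuotient, if_neg (hKx ▸ mul_ne_zero hsub hx), hHx, hKx, mul_div_mul_left _ _ hsub]

lemma differentiable_entireQuotient (hH : Differentiable ℂ H) (hK : Differentiable ℂ K)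
    (hzero : ∀ z, K z = 0 → H z = 0) (hsimple : ∀ z, K z = 0 → deriv K z ≠ 0) :
    Differentiable ℂ (entireQuotient H K) := by
  intro z
  by_cases hz : K z = 0
  · exact (((differentiable_dslope hH z) z).fun_div ((differentiable_dslope hK z) z)
      (by rw [dslope_same]; exact hsimple z hz)).congr_of_eventuallyEq
      (entireQuotient_eventuallyEq_dslope hK (hzero z hz) hz (hsimple z hz))
  · refine ((hH z).fun_div (hK z) hz).congr_of_eventuallyEq ?_
    filter_upwards [(hK z).continuousAt.eventually_ne hz] with x hx using if_neg hx

lemma dense_ne_zero_of_simple_zeros (hK : Differentiable ℂ K)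
    (hsimple : ∀ z, K z = 0 → deriv K z ≠ 0) : Dense {z | K z ≠ 0} := fun z => by
  by_cases hz : K z = 0
  · exact mem_closure_iff_frequently.mpr <| ((hK z).hasDerivAt.eventually_ne
      (hsimple z hz)).frequently.filter_mono nhdsWithin_le_nhds
  · exact subset_closure hz

lemma exists_eq_const_mul_of_quasiperiodic (Λ : Submodule ℤ ℂ) [DiscreteTopology Λ]
    [IsZLattice ℝ Λ] (hH : Differentiable ℂ H) (hK : Differentiable ℂ K)
    (hzero : ∀ z, K z = 0 → H z = 0) (hsimple : ∀ z, K z = 0 → deriv K z ≠ 0)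
    (hquasi : ∀ ω ∈ Λ, ∃ e : ℂ → ℂ, (∀ z, e z ≠ 0) ∧
      (∀ z, H (z + ω) = e z * H z) ∧ ∀ z, K (z + ω) = e z * K z) :
    ∃ c : ℂ, ∀ z, H z = c * K z := by
  have hq := differentiable_entireQuotient hH hK hzero hsimple
  have hperiodic : ∀ z, ∀ ω ∈ Λ, entireQuotient H K (z + ω) = entireQuotient H K z := by
    intro z ω hω
    obtain ⟨e, he, heH, heK⟩ := hquasi ω hω
    have hcont : Continuous fun z => entireQuotient H K (z + ω) :=
      hq.continuous.comp (continuous_add_const ω)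
    refine congrFun (hcont.ext_on (dense_ne_zero_of_simple_zeros hK hsimple) hq.continuous
      fun x (hx : K x ≠ 0) => ?_) z
    have hx' : K (x + ω) ≠ 0 := heK x ▸ mul_ne_zero (he x) hx
    simp only [entireQuotient, if_neg hx, if_neg hx']
    rw [heH, heK, mul_div_mul_left _ _ (he x)]
  have hbounded := (IsZLattice.isCompact_range_of_periodic Λ _ hq.continuous hperiodic).isBounded
  refine ⟨entireQuotient H K 0, fun z => ?_⟩
  rw [hq.apply_eq_apply_of_bounded hbounded 0 z, entireQuotient_mul_cancel hzero]

end Liouville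

namespace EllLattice

variable (L : EllLattice)

/-- The product `σ(x+y) σ(x-y)`, which equals `σ(x)² σ(y)² (℘(y) - ℘(x))`. -/
def sigmaPair (x y : ℂ) : ℂ := L.sigma (x + y) * L.sigma (x - y)

lemma sigmaPair_swap (x y : ℂ) : L.sigmaPair y x = -L.sigmaPair x y := by
  rw [sigmaPair, sigmaPair, ← neg_sub x y, sigma_neg, add_comm y x, mul_neg]

lemma sigmaPair_self (x : ℂ) : L.sigmaPair x x = 0 := by
  rw [sigmaPair, sub_self, sigma_zero, mul_zero]

lemma sigmaPair_neg_left (x y : ℂ) : L.sigmaPair (-x) y = L.sigmaPair x y := by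
  rw [sigmaPair, sigmaPair, show -x + y = -(x - y) by ring, show -x - y = -(x + y) by ring,
    sigma_neg, sigma_neg, neg_mul_neg, mul_comm]

lemma differentiable_sigmaPair_left (y : ℂ) : Differentiable ℂ fun x => L.sigmaPair x y := by
  have := L.differentiable_sigma
  unfold sigmaPair
  fun_prop

lemma continuous_sigmaPair_right (x : ℂ) : Continuous fun y => L.sigmaPair x y := by
  have := L.differentiable_sigma.continuous
  unfold sigmaPair
  fun_prop

lemma exists_sigmaPair_add_eq {ω : ℂ} (hω : ω ∈ L.toPeriodPair.lattice) :
    ∃ e : ℂ → ℂ, (∀ x, e x ≠ 0) ∧ ∀ x y, L.sigmaPair (x + ω) y = e x * L.sigmaPair x y := by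
  obtain ⟨A, η, hA, hσ⟩ := L.exists_sigma_add_eq hω
  refine ⟨fun x => A ^ 2 * Complex.exp (η * (2 * x)), fun x =>
    mul_ne_zero (pow_ne_zero 2 hA) (Complex.exp_ne_zero _), fun x y => ?_⟩
  have hexp : Complex.exp (η * (x + y)) * Complex.exp (η * (x - y)) =
      Complex.exp (η * (2 * x)) := by
    rw [← Complex.exp_add]; ring_nf
  rw [sigmaPair, sigmaPair, add_right_comm, add_sub_right_comm, hσ, hσ]
  linear_combination A ^ 2 * L.sigma (x + y) * L.sigma (x - y) * hexp

lemma sigmaPair_eq_zero_iff (x y : ℂ) : L.sigmaPair x y = 0 ↔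
    x + y ∈ L.toPeriodPair.lattice ∨ x - y ∈ L.toPeriodPair.lattice := by
  rw [sigmaPair, mul_eq_zero, sigma_eq_zero_iff, sigma_eq_zero_iff]

lemma deriv_sigmaPair_left_ne_zero {x y : ℂ} (hy : 2 * y ∉ L.toPeriodPair.lattice)
    (hxy : L.sigmaPair x y = 0) : deriv (fun x => L.sigmaPair x y) x ≠ 0 := by
  have hσ := L.differentiable_sigma
  have hderiv : deriv (fun x => L.sigmaPair x y) x =
      deriv L.sigma (x + y) * L.sigma (x - y) + L.sigma (x + y) * deriv L.sigma (x - y) := by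
    simp only [sigmaPair]
    rw [deriv_fun_mul (by fun_prop) (by fun_prop), deriv_comp_add_const, deriv_comp_sub_const]
  have hdiff : x + y - (x - y) = 2 * y := by ring
  rcases (L.sigmaPair_eq_zero_iff x y).mp hxy with h | h
  · rw [hderiv, (L.sigma_eq_zero_iff _).mpr h, zero_mul, add_zero]
    exact mul_ne_zero (L.deriv_sigma_ne_zero h)
      (L.sigma_ne_zero_of_notMem_lattice fun h' => hy (hdiff ▸ sub_mem h h'))
  · rw [hderiv, (L.sigma_eq_zero_iff _).mpr h, mul_zero, zero_add]
    exact mul_ne_zero (L.sigma_ne_zero_of_notMem_lattice fun h' => hy (hdiff ▸ sub_mem h' h))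
      (L.deriv_sigma_ne_zero h)

lemma eq_zero_of_sigmaPair_eq_zero {F : ℂ → ℂ} {z : ℂ}
    (hquasi : ∀ ω ∈ L.toPeriodPair.lattice, ∃ e : ℂ → ℂ, ∀ x, F (x + ω) = e x * F x)
    (hz : F z = 0) (hneg : F (-z) = 0) {x : ℂ} (hx : L.sigmaPair x z = 0) : F x = 0 := by
  rcases (L.sigmaPair_eq_zero_iff x z).mp hx with h | h <;> obtain ⟨e, he⟩ := hquasi _ h
  · simpa [hneg] using he (-z)
  · simpa [hz] using he z

/-- As functions of `x`, the first and third terms together have the multipliers of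
`σ(x+z) σ(x-z)` and vanish at its zeros, so they are a constant multiple of it; the constant is
read off at `x = y`. -/
lemma sigmaPair_three_term_of_notMem {y z : ℂ} (hz : 2 * z ∉ L.toPeriodPair.lattice)
    (hyz : L.sigmaPair y z ≠ 0) (x w : ℂ) :
    L.sigmaPair x y * L.sigmaPair z w + L.sigmaPair x z * L.sigmaPair w y +
      L.sigmaPair x w * L.sigmaPair y z = 0 := by
  let F : ℂ → ℂ := fun x => L.sigmaPair x y * L.sigmaPair z w + L.sigmaPair x w * L.sigmaPair y z
  have hquasi : ∀ ω ∈ L.toPeriodPair.lattice, ∃ e : ℂ → ℂ, (∀ x, e x ≠ 0) ∧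
      (∀ x, F (x + ω) = e x * F x) ∧ ∀ x, L.sigmaPair (x + ω) z = e x * L.sigmaPair x z := by
    intro ω hω
    obtain ⟨e, he, hpair⟩ := L.exists_sigmaPair_add_eq hω
    exact ⟨e, he, fun x => by simp only [F, hpair]; ring, fun x => hpair x z⟩
  have hFz : F z = 0 := by
    simp only [F, L.sigmaPair_swap z y]; ring
  have hF : Differentiable ℂ F :=
    ((L.differentiable_sigmaPair_left y).mul_const _).add
      ((L.differentiable_sigmaPair_left w).mul_const _)
  obtain ⟨c, hc⟩ := exists_eq_const_mul_of_quasiperiodic L.toPeriodPair.lattice hF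
    (L.differentiable_sigmaPair_left z)
    (fun x => L.eq_zero_of_sigmaPair_eq_zero (fun ω hω => (hquasi ω hω).imp fun e he => he.2.1)
      hFz (by simpa only [F, sigmaPair_neg_left] using hFz))
    (fun x => L.deriv_sigmaPair_left_ne_zero hz) hquasi
  have hcy : c = L.sigmaPair y w := by
    have := hc y
    simp only [F, sigmaPair_self, zero_mul, zero_add] at this
    exact mul_right_cancel₀ hyz this.symm
  have hx := hc x
  simp only [F, hcy] at hx
  rw [L.sigmaPair_swap y w]
  linear_combination hx

theorem sigmaPair_three_term (x y z w : ℂ) :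
    L.sigmaPair x y * L.sigmaPair z w + L.sigmaPair x z * L.sigmaPair w y +
      L.sigmaPair x w * L.sigmaPair y z = 0 := by
  have hdense : Dense {z | 2 * z ∉ L.toPeriodPair.lattice ∧ L.sigmaPair y z ≠ 0} := by
    have hcountable := ((L.countable_lattice.preimage
      (mul_right_injective₀ (two_ne_zero (α := ℂ)))).union
      (L.countable_lattice.preimage (add_right_injective y))).union
      (L.countable_lattice.preimage (sub_right_injective (b := y)))
    refine (hcountable.dense_compl ℝ).mono fun z hz => ?_
    simpa [sigmaPair_eq_zero_iff, not_or, and_assoc] using hz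
  have hleft : Continuous fun z => L.sigmaPair z w :=
    (L.differentiable_sigmaPair_left w).continuous
  have hx := L.continuous_sigmaPair_right x
  have hy := L.continuous_sigmaPair_right y
  have hcont : Continuous fun z => L.sigmaPair x y * L.sigmaPair z w +
      L.sigmaPair x z * L.sigmaPair w y + L.sigmaPair x w * L.sigmaPair y z := by
    fun_prop
  exact congrFun (hcont.ext_on hdense continuous_const fun z hz =>
    L.sigmaPair_three_term_of_notMem hz.1 hz.2 x w) z

lemma sigma_three_term (a b c t : ℂ) :
    L.sigma (a + t) * L.sigma (b + t) * (L.sigma (a + b + c) * L.sigma c) =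
      L.sigma t * L.sigma (a + b + t) * (L.sigma (a + c) * L.sigma (b + c)) +
        L.sigma (c - t) * L.sigma (a + b + c + t) * (L.sigma a * L.sigma b) := by
  have hpair : ∀ {x y : ℂ} (u v : ℂ), x + y = u → x - y = v →
      L.sigmaPair x y = L.sigma u * L.sigma v := by
    rintro x y _ _ rfl rfl; rfl
  have h := L.sigmaPair_three_term ((a + b) / 2 + t) ((a + b) / 2) ((a - b) / 2) (c + (a + b) / 2)
  rw [hpair (a + b + t) t (by ring) (by ring), hpair (a + c) (-(b + c)) (by ring) (by ring),
    hpair (a + t) (b + t) (by ring) (by ring), hpair (a + b + c) c (by ring) (by ring),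
    hpair (a + b + c + t) (-(c - t)) (by ring) (by ring), hpair a b (by ring) (by ring),
    sigma_neg, sigma_neg] at h
  linear_combination h

/-- The derivative of `sigma_three_term` at `t = 0`. -/
lemma deriv_sigma_three_term (a b c : ℂ) :
    (deriv L.sigma a * L.sigma b + L.sigma a * deriv L.sigma b) *
        (L.sigma (a + b + c) * L.sigma c) =
      L.sigma (a + b) * (L.sigma (a + c) * L.sigma (b + c)) +
        (-deriv L.sigma c * L.sigma (a + b + c) + L.sigma c * deriv L.sigma (a + b + c)) *
          (L.sigma a * L.sigma b) := by
  have hσ : ∀ x : ℂ, HasDerivAt L.sigma (deriv L.sigma x) x := fun x =>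
    (L.differentiable_sigma x).hasDerivAt
  have hadd : ∀ x : ℂ, HasDerivAt (fun t => L.sigma (x + t)) (deriv L.sigma x) 0 := fun x =>
    HasDerivAt.comp_const_add x 0 (by simpa using hσ x)
  have hsub : HasDerivAt (fun t => L.sigma (c - t)) (-deriv L.sigma c) 0 :=
    HasDerivAt.comp_const_sub c 0 (by simpa using hσ c)
  have hleft := ((hadd a).fun_mul (hadd b)).mul_const (L.sigma (a + b + c) * L.sigma c)
  have hright := (((hσ 0).fun_mul (hadd (a + b))).mul_const
    (L.sigma (a + c) * L.sigma (b + c))).fun_add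
      ((hsub.fun_mul (hadd (a + b + c))).mul_const (L.sigma a * L.sigma b))
  have h := hleft.unique (funext (L.sigma_three_term a b c) ▸ hright)
  simpa [sigma_zero, deriv_sigma_zero] using h

lemma chi_eq_div_sigma {a b c : ℂ} (ha : L.sigma a ≠ 0) (hb : L.sigma b ≠ 0) (hc : L.sigma c ≠ 0)
    (habc : L.sigma (c + a + b) ≠ 0) :
    L.chi a b c = L.sigma (a + b) * L.sigma (a + c) * L.sigma (b + c) /
      (L.sigma a * L.sigma b * L.sigma c * L.sigma (c + a + b)) := by
  have h := L.deriv_sigma_three_term a b c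
  rw [show a + b + c = c + a + b by ring] at h
  simp only [chi, zeta]
  field_simp
  linear_combination h

lemma Phi_neg_left (ξ κ : ℂ) : L.Phi (-ξ) κ = -L.Phi ξ (-κ) := by
  rw [Phi, Phi, show -ξ + κ = -(ξ + -κ) by ring, sigma_neg, sigma_neg, sigma_neg, neg_div,
    neg_mul, mul_neg]

/-- Fay's trisecant identity in genus one. -/
lemma Phi_addition {ξ δ κ μ : ℂ} (hξ : L.sigma ξ ≠ 0) (hδ : L.sigma δ ≠ 0) (hκ : L.sigma κ ≠ 0)
    (hμ : L.sigma μ ≠ 0) (hξδ : L.sigma (ξ + δ) ≠ 0) (hκμ : L.sigma (κ + μ) ≠ 0) :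
    L.Phi ξ (κ + μ) * L.Phi δ μ =
      L.Phi δ (-κ) * L.Phi (ξ + δ) (κ + μ) + L.Phi ξ κ * L.Phi (ξ + δ) μ := by
  have h := L.sigma_three_term ξ μ δ κ
  rw [add_comm μ κ] at h
  rw [Phi, Phi, Phi, Phi, Phi, Phi, sigma_neg, ← sub_eq_add_neg, add_comm δ μ,
    show ξ + (κ + μ) = ξ + μ + κ by ring, show ξ + δ + (κ + μ) = ξ + μ + δ + κ by ring,
    add_right_comm ξ δ μ]
  field_simp
  linear_combination -h

lemma chi_eq_Phi_mul_div {α δ ξ : ℂ} (hα : L.sigma α ≠ 0) (hδ : L.sigma δ ≠ 0)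
    (hξ : L.sigma ξ ≠ 0) (hξδ : L.sigma (ξ + δ) ≠ 0) (hξαδ : L.sigma (ξ + α + δ) ≠ 0) :
    L.chi α δ ξ = L.Phi ξ α * L.Phi δ α / L.Phi (ξ + δ) α := by
  rw [L.chi_eq_div_sigma hα hδ hξ hξαδ, Phi, Phi, Phi, add_comm ξ α, add_comm δ α, add_comm δ ξ,
    add_right_comm ξ δ α, add_comm ξ α]
  rw [add_comm ξ α] at hξαδ
  field_simp

lemma chi_inv_mul_Phi {α κ ξ : ℂ} (hα : L.sigma α ≠ 0) (hκ : L.sigma κ ≠ 0)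
    (hξ : L.sigma ξ ≠ 0) (hξκ : L.sigma (ξ + κ) ≠ 0) (hξακ : L.sigma (ξ + α + κ) ≠ 0) :
    (L.chi α κ ξ)⁻¹ * L.Phi ξ κ = L.Phi ξ (α + κ) / L.Phi ξ α := by
  rw [L.chi_eq_div_sigma hα hκ hξ hξακ, Phi, Phi, Phi, add_comm ξ α, add_comm κ ξ,
    ← add_assoc ξ α κ, add_comm ξ α]
  field_simp

variable {L} {ι ι' : Type*}

variable (L) in
/-- The points `z i` are in general position with respect to the lattice: no nontrivial integer
combination of them is a lattice point. -/
def GeneralPosition (z : ι → ℂ) : Prop :=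
  LinearIndependent ℤ (L.toPeriodPair.lattice.mkQ ∘ z)

lemma generalPosition_iff [Fintype ι] {z : ι → ℂ} :
    L.GeneralPosition z ↔ ∀ c : ι → ℤ, ∑ i, c i • z i ∈ L.toPeriodPair.lattice → c = 0 := by
  refine Fintype.linearIndependent_iff.trans <| forall_congr' fun c => ?_
  rw [← Submodule.Quotient.mk_eq_zero, ← Submodule.mkQ_apply, map_sum, funext_iff]
  simp only [map_zsmul, Function.comp_apply, Pi.zero_apply]

lemma GeneralPosition.comp {z : ι → ℂ} (hz : L.GeneralPosition z) {f : ι' → ι}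
    (hf : Function.Injective f) : L.GeneralPosition (z ∘ f) :=
  LinearIndependent.comp hz f hf

lemma GeneralPosition.add_sum [Fintype ι] {x : ℂ} {z : ι → ℂ}
    (hz : L.GeneralPosition fun o : Option ι => o.elim x z) (p : ι → ℤ) :
    L.GeneralPosition fun o : Option ι => o.elim (x + ∑ i, p i • z i) z := by
  refine generalPosition_iff.mpr fun c hc => ?_
  have hcomb := generalPosition_iff.mp hz
    (fun o => o.elim (c none) fun i => c (some i) + c none * p i)
    (by simpa [add_mul, Finset.sum_add_distrib, Finset.mul_sum, mul_add, mul_assoc, add_assoc,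
      add_comm, add_left_comm] using hc)
  have hnone : c none = 0 := congrFun hcomb none
  funext o
  cases o with
  | none => exact hnone
  | some i => simpa [hnone] using congrFun hcomb (some i)

lemma GeneralPosition.sigma_ne_zero [Fintype ι] {z : ι → ℂ} (hz : L.GeneralPosition z)
    {c : ι → ℤ} (hc : c ≠ 0) : L.sigma (∑ i, c i • z i) ≠ 0 :=
  L.sigma_ne_zero_of_notMem_lattice fun h => hc (generalPosition_iff.mp hz c h)

lemma GeneralPosition.sigma_ne_zero_two {δ κ : ℂ} (h : L.GeneralPosition ![δ, κ]) {a b : ℤ}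
    (hab : ![a, b] ≠ 0) : L.sigma (a * δ + b * κ) ≠ 0 := by
  simpa [Fin.sum_univ_two] using h.sigma_ne_zero hab

lemma GeneralPosition.sigma_ne_zero_four {ξ δ κ μ : ℂ} (h : L.GeneralPosition ![ξ, δ, κ, μ])
    {a b c d : ℤ} (habcd : ![a, b, c, d] ≠ 0) :
    L.sigma (a * ξ + b * δ + c * κ + d * μ) ≠ 0 := by
  simpa [Fin.sum_univ_four] using h.sigma_ne_zero habcd

lemma GeneralPosition.Phi_ne_zero {δ κ : ℂ} (h : L.GeneralPosition ![δ, κ]) :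
    L.Phi δ κ ≠ 0 :=
  div_ne_zero (by simpa using h.sigma_ne_zero_two (a := 1) (b := 1) (by decide)) <| mul_ne_zero
    (by simpa using h.sigma_ne_zero_two (a := 1) (b := 0) (by decide))
    (by simpa using h.sigma_ne_zero_two (a := 0) (b := 1) (by decide))

lemma GeneralPosition.Phi_neg_ne_zero {δ κ : ℂ} (h : L.GeneralPosition ![δ, κ]) :
    L.Phi δ (-κ) ≠ 0 :=
  div_ne_zero (by simpa using h.sigma_ne_zero_two (a := 1) (b := -1) (by decide)) <| mul_ne_zero
    (by simpa using h.sigma_ne_zero_two (a := 1) (b := 0) (by decide))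
    (by simpa using h.sigma_ne_zero_two (a := 0) (b := -1) (by decide))

lemma GeneralPosition.Phi_addition {ξ δ κ μ : ℂ} (h : L.GeneralPosition ![ξ, δ, κ, μ]) :
    L.Phi ξ (κ + μ) * L.Phi δ μ =
      L.Phi δ (-κ) * L.Phi (ξ + δ) (κ + μ) + L.Phi ξ κ * L.Phi (ξ + δ) μ := by
  have hσ : ∀ {a b c d : ℤ}, ![a, b, c, d] ≠ 0 → L.sigma (a * ξ + b * δ + c * κ + d * μ) ≠ 0 :=
    h.sigma_ne_zero_four
  exact L.Phi_addition (by simpa using @hσ 1 0 0 0 (by decide))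
    (by simpa using @hσ 0 1 0 0 (by decide)) (by simpa using @hσ 0 0 1 0 (by decide))
    (by simpa using @hσ 0 0 0 1 (by decide)) (by simpa using @hσ 1 1 0 0 (by decide))
    (by simpa using @hσ 0 0 1 1 (by decide))

lemma GeneralPosition.chi_inv_mul_Phi_add {ξ δ κ α : ℂ} (h : L.GeneralPosition ![ξ, δ, κ, α]) :
    (L.chi α κ (ξ + δ))⁻¹ * (L.Phi δ (-κ) * L.Phi (ξ + δ) κ) =
      -L.Phi ξ κ + L.chi α δ ξ * ((L.chi α κ ξ)⁻¹ * L.Phi ξ κ) := by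
  have hσ : ∀ {a b c d : ℤ}, ![a, b, c, d] ≠ 0 → L.sigma (a * ξ + b * δ + c * κ + d * α) ≠ 0 :=
    h.sigma_ne_zero_four
  have hξ : L.sigma ξ ≠ 0 := by simpa using @hσ 1 0 0 0 (by decide)
  have hδ : L.sigma δ ≠ 0 := by simpa using @hσ 0 1 0 0 (by decide)
  have hκ : L.sigma κ ≠ 0 := by simpa using @hσ 0 0 1 0 (by decide)
  have hα : L.sigma α ≠ 0 := by simpa using @hσ 0 0 0 1 (by decide)
  have hξδ : L.sigma (ξ + δ) ≠ 0 := by simpa using @hσ 1 1 0 0 (by decide)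
  have hξα : L.sigma (ξ + α) ≠ 0 := by simpa using @hσ 1 0 0 1 (by decide)
  have hξδα : L.sigma (ξ + δ + α) ≠ 0 := by simpa using @hσ 1 1 0 1 (by decide)
  have hΦ : L.Phi ξ α ≠ 0 := div_ne_zero hξα (mul_ne_zero hξ hα)
  have hΦδ : L.Phi (ξ + δ) α ≠ 0 := div_ne_zero hξδα (mul_ne_zero hξδ hα)
  rw [mul_left_comm, L.chi_inv_mul_Phi hα hκ hξδ
    (by simpa using @hσ 1 1 1 0 (by decide))
    (by simpa [add_right_comm] using @hσ 1 1 1 1 (by decide)),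
    L.chi_inv_mul_Phi hα hκ hξ (by simpa using @hσ 1 0 1 0 (by decide))
    (by simpa [add_right_comm] using @hσ 1 0 1 1 (by decide)),
    L.chi_eq_Phi_mul_div hα hδ hξ hξδ (add_right_comm ξ δ α ▸ hξδα), add_comm α κ]
  field_simp
  linear_combination -h.Phi_addition

lemma GeneralPosition.reverse_shift {ξ δ κ μ : ℂ} (h : L.GeneralPosition ![ξ, δ, κ, μ]) :
    L.GeneralPosition ![ξ + δ, -δ, κ, μ] := by
  refine generalPosition_iff.mpr fun c hc => ?_
  have hcomb := generalPosition_iff.mp h ![c 0, c 0 - c 1, c 2, c 3] <| by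
    convert hc using 1
    simp only [zsmul_eq_mul, Fin.sum_univ_four, Matrix.cons_val]
    push_cast
    ring
  simp only [funext_iff, Fin.forall_fin_succ, cons_val_zero, cons_val_succ, cons_val_fin_one,
    Pi.zero_apply, forall_const, Fin.succ_zero_eq_one, Fin.succ_one_eq_two, Fin.reduceSucc,
    IsEmpty.forall_iff, and_true] at hcomb ⊢
  omega

lemma GeneralPosition.Phi_mul_chi_inv {ξ δ κ β : ℂ} (h : L.GeneralPosition ![ξ, δ, κ, β]) :
    L.Phi δ κ * L.Phi ξ κ * (L.chi β κ ξ)⁻¹ =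
      L.Phi (ξ + δ) κ - L.chi β (-δ) (ξ + δ) * (L.Phi (ξ + δ) κ * (L.chi β κ (ξ + δ))⁻¹) := by
  have hrev := h.reverse_shift.chi_inv_mul_Phi_add
  rw [add_neg_cancel_right, Phi_neg_left, neg_neg] at hrev
  linear_combination -hrev

end EllLattice

section RankOneUpdate

variable {m n R : Type*} [Fintype m] [Fintype n] [DecidableEq m] [DecidableEq n] [CommRing R]

lemma inv_one_add_mul_comm_mul {A : Matrix m n R} {B : Matrix n m R}
    (h : IsUnit (1 + A * B).det) : (1 + B * A)⁻¹ * B = B * (1 + A * B)⁻¹ := by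
  have h' : IsUnit (1 + B * A).det := by rwa [det_one_add_mul_comm]
  calc (1 + B * A)⁻¹ * B = (1 + B * A)⁻¹ * (B * (1 + A * B)) * (1 + A * B)⁻¹ := by
        rw [Matrix.mul_assoc, mul_nonsing_inv_cancel_right _ _ h]
    _ = (1 + B * A)⁻¹ * ((1 + B * A) * B) * (1 + A * B)⁻¹ := by
        simp only [Matrix.mul_add, Matrix.add_mul, Matrix.mul_one, Matrix.one_mul,
          Matrix.mul_assoc]
    _ = B * (1 + A * B)⁻¹ := by rw [nonsing_inv_mul_cancel_left _ _ h']

variable {A B : Matrix n n R} {r b : n → R}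

lemma inv_sub_inv_of_eq_add_vecMulVec (hA : IsUnit A.det) (hB : IsUnit B.det)
    (h : B = A + vecMulVec r b) : A⁻¹ - B⁻¹ = vecMulVec (B⁻¹ *ᵥ r) (b ᵥ* A⁻¹) := by
  have hAB : IsUnit B ↔ IsUnit A := by simp only [isUnit_iff_isUnit_det, hA, hB]
  rw [← neg_sub, Matrix.inv_sub_inv hAB, ← Matrix.neg_mul, ← Matrix.mul_neg, neg_sub,
    sub_eq_of_eq_add' h, mul_vecMulVec, vecMulVec_mul]

lemma inv_mulVec_of_eq_add_vecMulVec (hA : IsUnit A.det) (hB : IsUnit B.det)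
    (h : B = A + vecMulVec r b) (x : n → R) :
    A⁻¹ *ᵥ x = B⁻¹ *ᵥ x + (b ⬝ᵥ A⁻¹ *ᵥ x) • B⁻¹ *ᵥ r := by
  rw [← sub_eq_iff_eq_add', ← sub_mulVec, inv_sub_inv_of_eq_add_vecMulVec hA hB h,
    vecMulVec_mulVec, dotProduct_mulVec, op_smul_eq_smul]

lemma vecMul_inv_of_eq_add_vecMulVec (hA : IsUnit A.det) (hB : IsUnit B.det)
    (h : B = A + vecMulVec r b) (x : n → R) :
    x ᵥ* B⁻¹ = x ᵥ* A⁻¹ - (x ⬝ᵥ B⁻¹ *ᵥ r) • b ᵥ* A⁻¹ := by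
  rw [eq_sub_iff_add_eq', ← eq_sub_iff_add_eq, ← vecMul_sub,
    inv_sub_inv_of_eq_add_vecMulVec hA hB h, vecMul_vecMulVec]

end RankOneUpdate

section InvDiagonal

variable {n K : Type*} [Fintype n] [DecidableEq n] [Field K] {v : n → K}

lemma inv_diagonal_of_ne_zero (hv : ∀ i, v i ≠ 0) : (diagonal v)⁻¹ = diagonal v⁻¹ := by
  refine Matrix.inv_eq_right_inv ?_
  rw [diagonal_mul_diagonal, ← diagonal_one]
  exact congrArg _ (funext fun i => mul_inv_cancel₀ (hv i))

lemma inv_diagonal_mulVec (hv : ∀ i, v i ≠ 0) (x : n → K) (i : n) :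
    ((diagonal v)⁻¹ *ᵥ x) i = (v i)⁻¹ * x i := by
  rw [inv_diagonal_of_ne_zero hv, mulVec_diagonal, Pi.inv_apply]

lemma vecMul_inv_diagonal (hv : ∀ i, v i ≠ 0) (x : n → K) (i : n) :
    (x ᵥ* (diagonal v)⁻¹) i = x i * (v i)⁻¹ := by
  rw [inv_diagonal_of_ne_zero hv, vecMul_diagonal, Pi.inv_apply]

end InvDiagonal

lemma prod_zpow_add_single {ι G₀ : Type*} [Fintype ι] [DecidableEq ι] [CommGroupWithZero G₀]
    {f : ι → G₀} {k : ι} (hf : f k ≠ 0) (p : ι → ℤ) :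
    ∏ j, f j ^ (p + Pi.single k 1 : ι → ℤ) j = (∏ j, f j ^ p j) * f k := by
  have hfactor : ∀ j, f j ^ (p + Pi.single k 1 : ι → ℤ) j =
      f j ^ p j * (Pi.mulSingle k (f k) : ι → G₀) j := fun j => by
    obtain rfl | hj := eq_or_ne j k
    · simp [zpow_add_one₀ hf]
    · simp [hj]
  rw [Fintype.prod_congr _ _ hfactor, Finset.prod_mul_distrib, Finset.prod_pi_mulSingle',
    if_pos (Finset.mem_univ k)]

namespace KPData

variable {N N' P : ℕ} (D : KPData N N')

/-- The three lattice parameters `δ, ε, λ`, indexed by the lattice directions. -/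
def steps : Fin 3 → ℂ := ![D.del, D.eps, D.lam]

/-- The plane-wave factor `ρ_i` at the site `p`, without the exponential factors: in `M`, `r` and
`s` these cancel against those of `Ψ`, leaving `Φ`. -/
def bareρ (i : Fin N) (p : Fin 3 → ℤ) : ℂ :=
  (∏ k, D.L.Phi (D.steps k) (-(D.κ i)) ^ p k) * D.ρ0 i

/-- The plane-wave factor `ν_j` at the site `p`, without the exponential factors. -/
def bareν (j : Fin N') (p : Fin 3 → ℤ) : ℂ :=
  (∏ k, D.L.Phi (D.steps k) (D.κ' j) ^ (-p k)) * D.ν0 j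

lemma ρ_eq_bareρ_mul_exp (i : Fin N) (n m h : ℤ) :
    D.ρ i n m h = D.bareρ i ![n, m, h] * Complex.exp (D.L.zeta (D.xi n m h) * D.κ i) := by
  have hgauge : ∀ δ, Complex.exp (-(D.L.zeta δ) * D.κ i) * D.L.Psi δ (-(D.κ i)) =
      D.L.Phi δ (-(D.κ i)) := fun δ => by
    rw [EllLattice.Psi, mul_left_comm, ← Complex.exp_add]
    simp
  simp only [ρ, hgauge, bareρ, steps, Fin.prod_univ_three, Matrix.cons_val]
  ring

lemma ν_eq_bareν_mul_exp (j : Fin N') (n m h : ℤ) :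
    D.ν j n m h = D.bareν j ![n, m, h] * Complex.exp (D.L.zeta (D.xi n m h) * D.κ' j) := by
  have hgauge : ∀ δ, Complex.exp (D.L.zeta δ * D.κ' j) * D.L.Psi δ (D.κ' j) =
      D.L.Phi δ (D.κ' j) := fun δ => by
    rw [EllLattice.Psi, mul_left_comm, ← Complex.exp_add]
    simp
  simp only [ν, hgauge, bareν, steps, Fin.prod_univ_three, Matrix.cons_val]
  ring

lemma r_apply (i : Fin N) (n m h : ℤ) :
    D.r n m h i = D.bareρ i ![n, m, h] * D.L.Phi (D.xi n m h) (D.κ i) := by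
  rw [r, ρ_eq_bareρ_mul_exp, EllLattice.Psi, neg_mul, Complex.exp_neg]
  field_simp

lemma s_apply (j : Fin N') (n m h : ℤ) :
    D.s n m h j = D.bareν j ![n, m, h] * D.L.Phi (D.xi n m h) (D.κ' j) := by
  rw [s, ν_eq_bareν_mul_exp, EllLattice.Psi, neg_mul, Complex.exp_neg]
  field_simp

lemma M_apply (i : Fin N) (j : Fin N') (n m h : ℤ) :
    D.M n m h i j = D.bareρ i ![n, m, h] * D.L.Phi (D.xi n m h) (D.κ i + D.κ' j) *
      D.bareν j ![n, m, h] := by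
  rw [M, Matrix.of_apply, ρ_eq_bareρ_mul_exp, ν_eq_bareν_mul_exp, EllLattice.Psi, neg_mul,
    Complex.exp_neg, mul_add, Complex.exp_add]
  field_simp

lemma bareρ_add_single {i : Fin N} {k : Fin 3} (hΦ : D.L.Phi (D.steps k) (-(D.κ i)) ≠ 0)
    (p : Fin 3 → ℤ) :
    D.bareρ i (p + Pi.single k 1) = D.bareρ i p * D.L.Phi (D.steps k) (-(D.κ i)) := by
  rw [bareρ, bareρ, prod_zpow_add_single (f := fun k => D.L.Phi (D.steps k) (-(D.κ i))) hΦ]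
  ring

lemma bareν_add_single_mul {j : Fin N'} {k : Fin 3} (hΦ : D.L.Phi (D.steps k) (D.κ' j) ≠ 0)
    (p : Fin 3 → ℤ) :
    D.bareν j (p + Pi.single k 1) * D.L.Phi (D.steps k) (D.κ' j) = D.bareν j p := by
  simp only [bareν, _root_.zpow_neg, ← _root_.inv_zpow]
  rw [prod_zpow_add_single (f := fun k => (D.L.Phi (D.steps k) (D.κ' j))⁻¹) (inv_ne_zero hΦ)]
  field_simp

lemma xi_eq_add_sum (n m h : ℤ) :
    D.xi n m h = D.xi0 + ∑ k, (![n, m, h] : Fin 3 → ℤ) k • D.steps k := by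
  simp [xi, steps, Fin.sum_univ_three, add_assoc]

/-- The marked points `δ, ε, λ, κ_i, κ′_j` together with the auxiliary points `extra`. -/
def points (extra : Fin P → ℂ) : Fin 3 ⊕ Fin N ⊕ Fin N' ⊕ Fin P → ℂ :=
  Sum.elim D.steps (Sum.elim D.κ (Sum.elim D.κ' extra))

variable {D} {extra : Fin P → ℂ}

lemma Generic.generalPosition (hgen : D.Generic extra) :
    D.L.GeneralPosition fun o : Option _ => o.elim D.xi0 (D.points extra) := by
  refine EllLattice.generalPosition_iff.mpr fun c hc => ?_
  by_contra hne
  refine hgen (c none) (c (some (.inl 0))) (c (some (.inl 1))) (c (some (.inl 2)))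
    (fun i => c (some (.inr (.inl i)))) (fun j => c (some (.inr (.inr (.inl j)))))
    (fun t => c (some (.inr (.inr (.inr t))))) ?_ ?_
  · simpa [funext_iff, Option.forall, Fin.forall_fin_succ, and_assoc] using hne
  · rw [D.L.mem_iff_mem_lattice]
    simpa [points, steps, Fin.sum_univ_three, add_assoc] using hc

lemma Generic.generalPosition_site (hgen : D.Generic extra) (n m h : ℤ) :
    D.L.GeneralPosition fun o : Option _ => o.elim (D.xi n m h) (D.points extra) := by
  have hsite : D.xi n m h = D.xi0 +
      ∑ a, (Sum.elim ![n, m, h] 0 : _ → ℤ) a • D.points extra a := by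
    simp [xi_eq_add_sum, points]
  rw [hsite]
  exact hgen.generalPosition.add_sum _

lemma Generic.generalPosition_four (hgen : D.Generic extra) (n m h : ℤ) (k : Fin 3)
    {a b : Fin N ⊕ Fin N' ⊕ Fin P} (hab : a ≠ b) :
    D.L.GeneralPosition
      ![D.xi n m h, D.steps k, D.points extra (.inr a), D.points extra (.inr b)] := by
  have hinj : Function.Injective ![none, some (Sum.inl k), some (.inr a), some (.inr b)] := by
    simp [Function.Injective, Fin.forall_fin_succ, hab, hab.symm]
  convert (hgen.generalPosition_site n m h).comp hinj using 1
  ext i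
  fin_cases i <;> rfl

lemma Generic.generalPosition_step (hgen : D.Generic extra) (k : Fin 3)
    (a : Fin N ⊕ Fin N' ⊕ Fin P) :
    D.L.GeneralPosition ![D.steps k, D.points extra (.inr a)] := by
  have hinj : Function.Injective ![some (Sum.inl k), some (.inr a)] := by
    simp [Function.Injective, Fin.forall_fin_succ]
  convert hgen.generalPosition.comp hinj using 1
  ext i
  fin_cases i <;> rfl

variable {k : Fin 3} {n m h n' m' h' : ℤ}

lemma xi_of_step (hstep : (![n', m', h'] : Fin 3 → ℤ) = ![n, m, h] + Pi.single k 1) :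
    D.xi n' m' h' = D.xi n m h + D.steps k := by
  rw [xi_eq_add_sum, xi_eq_add_sum, hstep]
  simp [add_smul, Finset.sum_add_distrib, Pi.single_apply, add_assoc]

variable {t : Fin P}

lemma M_eq_add_vecMulVec (hgen : D.Generic extra)
    (hstep : (![n', m', h'] : Fin 3 → ℤ) = ![n, m, h] + Pi.single k 1) :
    D.M n m h = D.M n' m' h' + vecMulVec (D.r n m h) (D.s n' m' h') := by
  ext i j
  have hκ : D.L.GeneralPosition ![D.steps k, D.κ i] := hgen.generalPosition_step k (.inl i)
  have hκ' : D.L.GeneralPosition ![D.steps k, D.κ' j] :=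
    hgen.generalPosition_step k (.inr (.inl j))
  have hκκ' : D.L.GeneralPosition ![D.xi n m h, D.steps k, D.κ i, D.κ' j] :=
    hgen.generalPosition_four n m h k (a := .inl i) (b := .inr (.inl j)) Sum.inl_ne_inr
  rw [Matrix.add_apply, vecMulVec_apply, M_apply, M_apply, r_apply, s_apply, xi_of_step hstep,
    hstep, D.bareρ_add_single hκ.Phi_neg_ne_zero, ← D.bareν_add_single_mul hκ'.Phi_ne_zero]
  linear_combination D.bareρ i ![n, m, h] * D.bareν j (![n, m, h] + Pi.single k 1) *
    hκκ'.Phi_addition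

lemma inv_DK_mulVec_r_of_step (hgen : D.Generic extra)
    (hχ : ∀ (n m h : ℤ) (i : Fin N), D.L.chi (extra t) (D.κ i) (D.xi n m h) ≠ 0)
    (hstep : (![n', m', h'] : Fin 3 → ℤ) = ![n, m, h] + Pi.single k 1) :
    (D.DK (extra t) n' m' h')⁻¹ *ᵥ D.r n' m' h' =
      -D.r n m h + D.L.chi (extra t) (D.steps k) (D.xi n m h) •
        ((D.DK (extra t) n m h)⁻¹ *ᵥ D.r n m h) := by
  ext i
  have hκ : D.L.GeneralPosition ![D.steps k, D.κ i] := hgen.generalPosition_step k (.inl i)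
  have hκα : D.L.GeneralPosition ![D.xi n m h, D.steps k, D.κ i, extra t] :=
    hgen.generalPosition_four n m h k (a := .inl i) (b := .inr (.inr t)) Sum.inl_ne_inr
  rw [Pi.add_apply, Pi.neg_apply, Pi.smul_apply, smul_eq_mul, DK, DK,
    inv_diagonal_mulVec (hχ n' m' h'), inv_diagonal_mulVec (hχ n m h), r_apply, r_apply,
    xi_of_step hstep, hstep, D.bareρ_add_single hκ.Phi_neg_ne_zero]
  linear_combination D.bareρ i ![n, m, h] * hκα.chi_inv_mul_Phi_add

lemma s_vecMul_inv_DK'_of_step (hgen : D.Generic extra)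
    (hχ : ∀ (n m h : ℤ) (j : Fin N'), D.L.chi (extra t) (D.κ' j) (D.xi n m h) ≠ 0)
    (hstep : (![n', m', h'] : Fin 3 → ℤ) = ![n, m, h] + Pi.single k 1) :
    D.s n m h ᵥ* (D.DK' (extra t) n m h)⁻¹ =
      D.s n' m' h' - D.L.chi (extra t) (-D.steps k) (D.xi n' m' h') •
        (D.s n' m' h' ᵥ* (D.DK' (extra t) n' m' h')⁻¹) := by
  ext j
  have hκ' : D.L.GeneralPosition ![D.steps k, D.κ' j] :=
    hgen.generalPosition_step k (.inr (.inl j))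
  have hκ'β : D.L.GeneralPosition ![D.xi n m h, D.steps k, D.κ' j, extra t] :=
    hgen.generalPosition_four n m h k (a := .inr (.inl j)) (b := .inr (.inr t))
      (Sum.inr_injective.ne Sum.inl_ne_inr)
  rw [Pi.sub_apply, Pi.smul_apply, smul_eq_mul, DK', DK',
    vecMul_inv_diagonal (hχ n' m' h'), vecMul_inv_diagonal (hχ n m h), s_apply, s_apply,
    xi_of_step hstep, hstep, ← D.bareν_add_single_mul hκ'.Phi_ne_zero]
  linear_combination D.bareν j (![n, m, h] + Pi.single k 1) * hκ'β.Phi_mul_chi_inv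

lemma u_of_step (hgen : D.Generic extra)
    (hInv : ∀ n m h : ℤ, IsUnit (1 + D.M n m h * D.C).det)
    (hχ : ∀ (n m h : ℤ) (i : Fin N), D.L.chi (extra t) (D.κ i) (D.xi n m h) ≠ 0)
    (hstep : (![n', m', h'] : Fin 3 → ℤ) = ![n, m, h] + Pi.single k 1) :
    D.u (extra t) n' m' h' =
      -D.V (extra t) n' m' h' • D.u0 n m h +
        D.L.chi (extra t) (D.steps k) (D.xi n m h) • D.u (extra t) n m h := by
  have hrank : 1 + D.M n m h * D.C =
      1 + D.M n' m' h' * D.C + vecMulVec (D.r n m h) (D.s n' m' h' ᵥ* D.C) := by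
    rw [M_eq_add_vecMulVec hgen hstep, Matrix.add_mul, vecMulVec_mul, add_assoc]
  have hV : D.s n' m' h' ᵥ* D.C ⬝ᵥ (1 + D.M n' m' h' * D.C)⁻¹ *ᵥ
      ((D.DK (extra t) n' m' h')⁻¹ *ᵥ D.r n' m' h') = 1 - D.V (extra t) n' m' h' := by
    rw [V, sub_sub_cancel, ← dotProduct_mulVec, mulVec_mulVec _ D.C,
      ← inv_one_add_mul_comm_mul (hInv n' m' h'), ← mulVec_mulVec]
  rw [u, inv_mulVec_of_eq_add_vecMulVec (hInv n' m' h') (hInv n m h) hrank, hV,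
    inv_DK_mulVec_r_of_step hgen hχ hstep, mulVec_add, mulVec_neg, mulVec_smul]
  simp only [u, u0]
  module

lemma tu_of_step (hgen : D.Generic extra)
    (hInv : ∀ n m h : ℤ, IsUnit (1 + D.M n m h * D.C).det)
    (hχ : ∀ (n m h : ℤ) (j : Fin N'), D.L.chi (extra t) (D.κ' j) (D.xi n m h) ≠ 0)
    (hstep : (![n', m', h'] : Fin 3 → ℤ) = ![n, m, h] + Pi.single k 1) :
    D.tu (extra t) n m h =
      D.W (extra t) n m h • D.tu0 n' m' h' -
        D.L.chi (extra t) (-D.steps k) (D.xi n' m' h') • D.tu (extra t) n' m' h' := by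
  have hInv' : ∀ n m h : ℤ, IsUnit (1 + D.C * D.M n m h).det := fun n m h => by
    rw [det_one_add_mul_comm]
    exact hInv n m h
  have hrank : 1 + D.C * D.M n m h =
      1 + D.C * D.M n' m' h' + vecMulVec (D.C *ᵥ D.r n m h) (D.s n' m' h') := by
    rw [M_eq_add_vecMulVec hgen hstep, Matrix.mul_add, mul_vecMulVec, add_assoc]
  have hW : D.s n m h ᵥ* (D.DK' (extra t) n m h)⁻¹ ⬝ᵥ
      (1 + D.C * D.M n m h)⁻¹ *ᵥ (D.C *ᵥ D.r n m h) = 1 - D.W (extra t) n m h := by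
    rw [W, sub_sub_cancel, ← dotProduct_mulVec, mulVec_mulVec (D.r n m h),
      inv_one_add_mul_comm_mul (hInv n m h), ← mulVec_mulVec]
  rw [tu, vecMul_inv_of_eq_add_vecMulVec (hInv' n' m' h') (hInv' n m h) hrank, hW,
    s_vecMul_inv_DK'_of_step hgen hχ hstep, sub_vecMul, smul_vecMul]
  simp only [tu, tu0]
  module

end KPData

/-- Linear shift relations for the eigenvector `u_α` and the adjoint vector `ᵗu_β`:
`ũ_α = −u₀ Ṽ_α + χ_{α,δ}(ξ) u_α` and `ᵗu_β = W_β ᵗũ₀ − χ_{β,−δ}(ξ+δ) ᵗũ_β`,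
together with the analogous relations in the other two lattice directions. -/
theorem u_vectors_shift_relations {N N' : ℕ} (D : KPData N N') (α β : ℂ)
    (hρ0 : ∀ i, D.ρ0 i ≠ 0) (hν0 : ∀ j, D.ν0 j ≠ 0)
    (hgen : D.Generic ![α, β])
    (hInv : ∀ n m h : ℤ, IsUnit ((1 + D.M n m h * D.C).det))
    (hχα : ∀ (n m h : ℤ) (i : Fin N), D.L.chi α (D.κ i) (D.xi n m h) ≠ 0)
    (hχβ : ∀ (n m h : ℤ) (j : Fin N'), D.L.chi β (D.κ' j) (D.xi n m h) ≠ 0) :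
    ∀ n m h : ℤ,
      (D.u α (n + 1) m h =
        (-(D.V α (n + 1) m h)) • D.u0 n m h +
          D.L.chi α D.del (D.xi n m h) • D.u α n m h) ∧
      (D.tu β n m h =
        D.W β n m h • D.tu0 (n + 1) m h -
          D.L.chi β (-D.del) (D.xi (n + 1) m h) • D.tu β (n + 1) m h) ∧
      (D.u α n (m + 1) h =
        (-(D.V α n (m + 1) h)) • D.u0 n m h +
          D.L.chi α D.eps (D.xi n m h) • D.u α n m h) ∧
      (D.tu β n m h =
        D.W β n m h • D.tu0 n (m + 1) h -
          D.L.chi β (-D.eps) (D.xi n (m + 1) h) • D.tu β n (m + 1) h) ∧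
      (D.u α n m (h + 1) =
        (-(D.V α n m (h + 1))) • D.u0 n m h +
          D.L.chi α D.lam (D.xi n m h) • D.u α n m h) ∧
      (D.tu β n m h =
        D.W β n m h • D.tu0 n m (h + 1) -
          D.L.chi β (-D.lam) (D.xi n m (h + 1)) • D.tu β n m (h + 1)) := by
  intro n m h
  have hstep₀ : (![n + 1, m, h] : Fin 3 → ℤ) = ![n, m, h] + Pi.single 0 1 := by
    ext i; fin_cases i <;> simp
  have hstep₁ : (![n, m + 1, h] : Fin 3 → ℤ) = ![n, m, h] + Pi.single 1 1 := by
    ext i; fin_cases i <;> simp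
  have hstep₂ : (![n, m, h + 1] : Fin 3 → ℤ) = ![n, m, h] + Pi.single 2 1 := by
    ext i; fin_cases i <;> simp
  exact ⟨(KPData.u_of_step (t := 0) hgen hInv hχα hstep₀ :),
    (KPData.tu_of_step (t := 1) hgen hInv hχβ hstep₀ :),
    (KPData.u_of_step (t := 0) hgen hInv hχα hstep₁ :),
    (KPData.tu_of_step (t := 1) hgen hInv hχβ hstep₁ :),
    (KPData.u_of_step (t := 0) hgen hInv hχα hstep₂ :),
    (KPData.tu_of_step (t := 1) hgen hInv hχβ hstep₂ :)⟩
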